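/- Let Γ be a nontrivial group and X a geometric boundary for Γ. Let (α, A) and (β, B) be two B-cocycles Γ × X → ℝ. Then ℓ_α(γ) = ℓ_β(γ) for all γ ∈ Γ ∖ {e} if and only if there exists a continuous function φ : X → ℝ such that α(γ, x) − β(γ, x) = φ(γx) − φ(x) for all γ ∈ Γ and x ∈ X (i.e., [α] = [β] in H¹_c(Γ, X, ℝ)). -/

import Mathlib

open MeasureTheory
def IsHyperbolic {Γ X : Type*} [Group Γ] [TopologicalSpace X] [MulAction Γ X]
    (γ : Γ) (m p : X) : Prop :=
  m ≠ p ∧ γ • m = m ∧ γ • p = p ∧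
  (∀ K : Set X, IsCompact K → m ∉ K → ∀ U : Set X, IsOpen U → p ∈ U →
    ∃ N : ℕ, ∀ n ≥ N, ∀ x ∈ K, (γ ^ n) • x ∈ U) ∧
  (∀ K : Set X, IsCompact K → p ∉ K → ∀ V : Set X, IsOpen V → m ∈ V →
    ∃ N : ℕ, ∀ n ≥ N, ∀ x ∈ K, (γ⁻¹ ^ n) • x ∈ V)

structure IsGeometricBoundary (Γ X : Type*) [Group Γ] [TopologicalSpace X]
    [MeasurableSpace X] [MulAction Γ X] (pm pp : Γ → X) : Prop where
  compact : CompactSpace X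
  t2 : T2Space X
  nontrivial : Nontrivial X
  contSMul : ContinuousConstSMul Γ X
  borel : BorelSpace X
  minimal : ∀ x : X, Dense (MulAction.orbit Γ x)
  hyp : ∀ γ : Γ, γ ≠ 1 → IsHyperbolic γ (pm γ) (pp γ)
  measures : ∃ μ μ' : Measure X, μ ≠ 0 ∧ μ' ≠ 0 ∧
    IsFiniteMeasure μ ∧ IsFiniteMeasure μ' ∧
    (∀ γ : Γ, ∀ E : Set X, MeasurableSet E → (μ E = 0 ↔ μ ((γ • ·) ⁻¹' E) = 0)) ∧
    (∀ γ : Γ, ∀ E : Set X, MeasurableSet E → (μ' E = 0 ↔ μ' ((γ • ·) ⁻¹' E) = 0)) ∧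
    (∀ S : Set (X × X), MeasurableSet S →
      (∀ γ : Γ, (fun q : X × X => (γ • q.1, γ • q.2)) ⁻¹' S = S) →
      μ.prod μ' S = 0 ∨ μ.prod μ' Sᶜ = 0)

def IsCocycle {Γ X : Type*} [Group Γ] [MulAction Γ X] (c : Γ → X → ℝ) : Prop :=
  ∀ γ η : Γ, ∀ x : X, c (γ * η) x = c γ (η • x) + c η x

def IsBCocycle {Γ X : Type*} [Group Γ] [TopologicalSpace X] [MulAction Γ X]
    (c : Γ → X → ℝ) (C : X → X → ℝ) : Prop :=
  IsCocycle c ∧ (∀ γ : Γ, Continuous (c γ)) ∧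
  ContinuousOn (fun q : X × X => C q.1 q.2) {q : X × X | q.1 ≠ q.2} ∧
  ∀ γ : Γ, ∀ x y : X, x ≠ y → C (γ • x) (γ • y) - C x y = c γ x + c γ y

/-!
Write `ℓ` for the length spectrum of a B-cocycle `(c, C)`. For a hyperbolic element `γ`,
`c (γ ^ n) x - n ℓ γ` is a difference of two values of `C (·) γ⁻`. By ping-pong the attracting point
of `a ^ n * b ^ n` tends to `a⁺`, so that `ℓ (a ^ n * b ^ n) - n ℓ a - n ℓ b` tends to the
cross-ratio `C a⁺ a⁻ + C b⁺ b⁻ - C a⁺ b⁻ - C b⁺ a⁻`. Hence `ℓ` determines the cross-ratio at pairs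
`(γ⁺, γ⁻)`, and these pairs are dense by ping-pong and minimality. Now let `ℓ = 0`, as it is for the
difference of two B-cocycles with the same spectrum: the cross-ratio vanishes, the symmetrization of
`C` splits as `φ x + φ y`, and `c` is the coboundary of `φ`.
-/

open Filter Set Topology
open scoped Pointwise

lemma pow_smul_eq_of_smul_eq {M X : Type*} [Monoid M] [MulAction M X] {g : M} {x : X}
    (h : g • x = x) (n : ℕ) : g ^ n • x = x :=
  pow_mem (show g ∈ MulAction.stabilizerSubmonoid M x from h) n

/-! ### North-south dynamics -/

section Dynamics

variable {Γ X : Type*} [Group Γ] [TopologicalSpace X] [MulAction Γ X]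
  {g a b : Γ} {m p q ma pa mb pb : X}

namespace IsHyperbolic

lemma ne (h : IsHyperbolic g m p) : m ≠ p := h.1

lemma smul_repelling (h : IsHyperbolic g m p) : g • m = m := h.2.1

lemma smul_attracting (h : IsHyperbolic g m p) : g • p = p := h.2.2.1

lemma inv (h : IsHyperbolic g m p) : IsHyperbolic g⁻¹ p m := by
  obtain ⟨hne, hm, hp, hattr, hrep⟩ := h
  exact ⟨hne.symm, inv_smul_eq_iff.2 hp.symm, inv_smul_eq_iff.2 hm.symm, hrep, by simpa using hattr⟩

lemma conj [ContinuousConstSMul Γ X] (h : IsHyperbolic g m p) (k : Γ) :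
    IsHyperbolic (k * g * k⁻¹) (k • m) (k • p) := by
  have conj_attracts {f : Γ} {s t : X}
      (H : ∀ K : Set X, IsCompact K → s ∉ K → ∀ U : Set X, IsOpen U → t ∈ U →
        ∃ N : ℕ, ∀ n ≥ N, ∀ x ∈ K, f ^ n • x ∈ U)
      (K : Set X) (hK : IsCompact K) (hs : k • s ∉ K) (U : Set X) (hU : IsOpen U)
      (ht : k • t ∈ U) : ∃ N : ℕ, ∀ n ≥ N, ∀ x ∈ K, (k * f * k⁻¹) ^ n • x ∈ U := by
    obtain ⟨N, hN⟩ := H (k⁻¹ • K) (hK.smul _) (mt mem_inv_smul_set_iff.1 hs) (k⁻¹ • U) (hU.smul _)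
      (mem_inv_smul_set_iff.2 ht)
    refine ⟨N, fun n hn x hx => ?_⟩
    rw [conj_pow, mul_smul, mul_smul]
    exact mem_inv_smul_set_iff.1 (hN n hn _ (smul_mem_smul_set hx))
  obtain ⟨hne, hm, hp, hattr, hrep⟩ := h
  refine ⟨(MulAction.injective k).ne hne, ?_, ?_, conj_attracts hattr, ?_⟩
  · rw [mul_smul, inv_smul_smul, mul_smul, hm]
  · rw [mul_smul, inv_smul_smul, mul_smul, hp]
  · simpa only [conj_inv] using conj_attracts hrep

lemma eventually_mapsTo (h : IsHyperbolic g m p) {K U : Set X} (hK : IsCompact K) (hm : m ∉ K)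
    (hU : U ∈ 𝓝 p) : ∀ᶠ n : ℕ in atTop, MapsTo (g ^ n • ·) K U := by
  obtain ⟨N, hN⟩ := h.2.2.2.1 K hK hm (interior U) isOpen_interior (mem_interior_iff_mem_nhds.2 hU)
  filter_upwards [eventually_ge_atTop N] with n hn x hx using interior_subset (hN n hn x hx)

lemma tendsto_pow_smul (h : IsHyperbolic g m p) (hq : q ≠ m) :
    Tendsto (fun n : ℕ => g ^ n • q) atTop (𝓝 p) := fun _ hU =>
  (h.eventually_mapsTo isCompact_singleton hq.symm hU).mono fun _ hn => hn rfl

lemma tendsto_pow_smul_of_tendsto [LocallyCompactSpace X] [T1Space X] (h : IsHyperbolic g m p)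
    {x : ℕ → X} (hx : Tendsto x atTop (𝓝 q)) (hq : q ≠ m) :
    Tendsto (fun n => g ^ n • x n) atTop (𝓝 p) := by
  obtain ⟨K, hKq, hKm, hK⟩ := local_compact_nhds (isOpen_ne.mem_nhds hq)
  refine tendsto_def.2 fun U hU => ?_
  filter_upwards [h.eventually_mapsTo hK (fun hm => hKm hm rfl) hU, hx.eventually_mem hKq]
    with n hn hxn using hn hxn

lemma ne_one [T1Space X] [Infinite X] (h : IsHyperbolic g m p) : g ≠ 1 := by
  rintro rfl
  obtain ⟨x, hx⟩ := (toFinite {m, p}).exists_notMem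
  simp only [mem_insert_iff, mem_singleton_iff, not_or] at hx
  have hlim := h.tendsto_pow_smul hx.1
  simp only [one_pow, one_smul, tendsto_const_nhds_iff] at hlim
  exact hx.2 hlim

lemma attracting_unique [T2Space X] [Infinite X] {m' p' : X} (h : IsHyperbolic g m p)
    (h' : IsHyperbolic g m' p') : p = p' := by
  obtain ⟨x, hx⟩ := (toFinite {m, m'}).exists_notMem
  simp only [mem_insert_iff, mem_singleton_iff, not_or] at hx
  exact tendsto_nhds_unique (h.tendsto_pow_smul hx.1) (h'.tendsto_pow_smul hx.2)

lemma nhdsNE_attracting_neBot (h : IsHyperbolic g m p) {x : X} (hxm : x ≠ m) (hxp : x ≠ p) :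
    (𝓝[≠] p).NeBot := by
  have hne (n : ℕ) : g ^ n • x ≠ p := fun hn =>
    hxp (smul_left_cancel _ (hn.trans (pow_smul_eq_of_smul_eq h.smul_attracting n).symm))
  exact (tendsto_nhdsWithin_iff.2 ⟨h.tendsto_pow_smul hxm, Eventually.of_forall hne⟩).neBot

lemma nontrivial_of_mem_nhds_attracting [T1Space X] [Infinite X] (h : IsHyperbolic g m p)
    {U : Set X} (hU : U ∈ 𝓝 p) : U.Nontrivial := by
  obtain ⟨x, hx⟩ := (toFinite {m, p}).exists_notMem
  simp only [mem_insert_iff, mem_singleton_iff, not_or] at hx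
  have := h.nhdsNE_attracting_neBot hx.1 hx.2
  exact (infinite_of_mem_nhds p hU).nontrivial

lemma attracting_mem_of_mapsTo (h : IsHyperbolic g m p) {U : Set X} (hU : IsClosed U)
    (hU' : U.Nontrivial) (hmaps : MapsTo (g • ·) U U) : p ∈ U := by
  obtain ⟨x, hxU, hxm⟩ := hU'.exists_ne m
  refine hU.mem_of_tendsto (h.tendsto_pow_smul hxm) (Eventually.of_forall fun n => ?_)
  simpa only [smul_iterate] using hmaps.iterate n hxU

/-! ### Ping-pong -/

lemma eventually_mapsTo_pow_mul_pow [LocallyCompactSpace X] [T1Space X]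
    (ha : IsHyperbolic a ma pa) (hb : IsHyperbolic b mb pb) (hab : ma ≠ pb) {K U : Set X}
    (hK : IsCompact K) (hm : mb ∉ K) (hU : U ∈ 𝓝 pa) :
    ∀ᶠ n : ℕ in atTop, MapsTo ((a ^ n * b ^ n) • ·) K U := by
  obtain ⟨L, hLpb, hLma, hL⟩ := local_compact_nhds (isOpen_ne.mem_nhds hab.symm)
  filter_upwards [hb.eventually_mapsTo hK hm hLpb,
    ha.eventually_mapsTo hL (fun h => hLma h rfl) hU] with n hbn han
  simpa only [mul_smul, Function.comp_def] using han.comp hbn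

lemma eventually_pow_mul_pow_ne_one [LocallyCompactSpace X] [T1Space X] [Infinite X]
    (ha : IsHyperbolic a ma pa) (hb : IsHyperbolic b mb pb) (hab : ma ≠ pb) :
    ∀ᶠ n : ℕ in atTop, a ^ n * b ^ n ≠ 1 := by
  obtain ⟨e, he⟩ := (toFinite {pa, mb}).exists_notMem
  simp only [mem_insert_iff, mem_singleton_iff, not_or] at he
  filter_upwards [ha.eventually_mapsTo_pow_mul_pow hb hab isCompact_singleton (Ne.symm he.2)
    (isOpen_ne.mem_nhds (Ne.symm he.1))] with n hn hone
  exact hn (mem_singleton e) (by simp only [hone, one_smul])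

lemma tendsto_attracting_pow_mul_pow [LocallyCompactSpace X] [T2Space X] [Infinite X]
    (ha : IsHyperbolic a ma pa) (hb : IsHyperbolic b mb pb) (hab : ma ≠ pb) (hba : pa ≠ mb)
    {m p : ℕ → X} (h : ∀ᶠ n in atTop, IsHyperbolic (a ^ n * b ^ n) (m n) (p n)) :
    Tendsto p atTop (𝓝 pa) := by
  refine tendsto_def.2 fun U hU => ?_
  obtain ⟨K, hKpa, hKU, hK⟩ := local_compact_nhds (inter_mem hU (isOpen_ne.mem_nhds hba))
  filter_upwards [h, ha.eventually_mapsTo_pow_mul_pow hb hab hK (fun hm => (hKU hm).2 rfl) hKpa]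
    with n hn hmaps
  exact (hKU (hn.attracting_mem_of_mapsTo hK.isClosed
    (ha.nontrivial_of_mem_nhds_attracting hKpa) hmaps)).1

lemma tendsto_repelling_pow_mul_pow [LocallyCompactSpace X] [T2Space X] [Infinite X]
    (ha : IsHyperbolic a ma pa) (hb : IsHyperbolic b mb pb) (hab : ma ≠ pb) (hba : pa ≠ mb)
    {m p : ℕ → X} (h : ∀ᶠ n in atTop, IsHyperbolic (a ^ n * b ^ n) (m n) (p n)) :
    Tendsto m atTop (𝓝 mb) := by
  refine hb.inv.tendsto_attracting_pow_mul_pow ha.inv hab.symm hba.symm (p := m) (m := p) ?_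
  filter_upwards [h] with n hn
  simpa only [mul_inv_rev, inv_pow] using hn.inv

end IsHyperbolic

end Dynamics

/-! ### Density of the pairs of fixed points -/

/-- Actions all of whose nontrivial elements are hyperbolic, as in the definition of a geometric
boundary, but without a chosen labelling of the fixed points. -/
def IsHyperbolicAction (Γ X : Type*) [Group Γ] [TopologicalSpace X] [MulAction Γ X] : Prop :=
  ∀ γ : Γ, γ ≠ 1 → ∃ m p : X, IsHyperbolic γ m p

/-- The pairs `(γ⁺, γ⁻)` of fixed points of hyperbolic elements of `Γ`, attracting point first. -/
def hyperbolicPairs (Γ X : Type*) [Group Γ] [TopologicalSpace X] [MulAction Γ X] : Set (X × X) :=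
  {q | ∃ γ : Γ, IsHyperbolic γ q.2 q.1}

namespace IsHyperbolicAction

variable {Γ X : Type*} [Group Γ] [TopologicalSpace X] [MulAction Γ X]

lemma exists_smul_ne [T1Space X] [Nontrivial X] [MulAction.IsMinimal Γ X]
    (hyp : IsHyperbolicAction Γ X) (x : X) :
    ∃ (s : Γ) (m p : X), IsHyperbolic s m p ∧ x ≠ m ∧ x ≠ p := by
  obtain ⟨s, hs⟩ : ∃ s : Γ, s • x ≠ x :=
    isOpen_compl_singleton.exists_smul_mem Γ x (exists_ne x)
  obtain ⟨m, p, h⟩ := hyp s (by rintro rfl; exact hs (one_smul Γ x))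
  exact ⟨s, m, p, h, fun e => hs (e ▸ h.smul_repelling), fun e => hs (e ▸ h.smul_attracting)⟩

lemma infinite [T1Space X] [Nontrivial X] [MulAction.IsMinimal Γ X]
    (hyp : IsHyperbolicAction Γ X) : Infinite X := by
  obtain ⟨x, -⟩ := exists_pair_ne X
  obtain ⟨s, m, p, h, hxm, hxp⟩ := hyp.exists_smul_ne x
  have := h.nhdsNE_attracting_neBot hxm hxp
  exact infinite_univ_iff.1 (infinite_of_mem_nhds p univ_mem)

lemma exists_attracting_mem_nhds [T1Space X] [Nontrivial X] [ContinuousConstSMul Γ X]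
    [MulAction.IsMinimal Γ X] (hyp : IsHyperbolicAction Γ X) {x : X} {U : Set X} (hU : U ∈ 𝓝 x)
    (q : X) : ∃ (a : Γ) (m p : X), IsHyperbolic a m p ∧ p ∈ U ∧ m ≠ q := by
  obtain ⟨s, ms, ps, hs, hqms, hqps⟩ := hyp.exists_smul_ne q
  obtain ⟨k, hk⟩ := isOpen_interior.exists_smul_mem Γ ps ⟨x, mem_interior_iff_mem_nhds.2 hU⟩
  rcases ne_or_eq (k • ms) q with hne | rfl
  · exact ⟨_, _, _, hs.conj k, interior_subset hk, hne⟩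
  -- The conjugate of `s` by `k` repels from `q`, so its powers move the fixed points of `s`
  -- towards `k • ps ∈ U` and away from `q`.
  set a := k * s * k⁻¹
  have ha : IsHyperbolic a (k • ms) (k • ps) := hs.conj k
  obtain ⟨n, hn⟩ := ((ha.tendsto_pow_smul hqps.symm).eventually_mem
    (isOpen_interior.mem_nhds hk)).exists
  refine ⟨_, _, _, hs.conj (a ^ n), interior_subset hn, fun e => hqms.symm ?_⟩
  exact smul_left_cancel _ (e.trans (pow_smul_eq_of_smul_eq ha.smul_repelling n).symm)

lemma exists_eventually_isHyperbolic_pow_mul_pow [LocallyCompactSpace X] [T1Space X] [Infinite X]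
    (hyp : IsHyperbolicAction Γ X) {a b : Γ} {ma pa mb pb : X} (ha : IsHyperbolic a ma pa)
    (hb : IsHyperbolic b mb pb) (hab : ma ≠ pb) :
    ∃ m p : ℕ → X, ∀ᶠ n in atTop, IsHyperbolic (a ^ n * b ^ n) (m n) (p n) := by
  choose! m p hmp using hyp
  exact ⟨fun n => m (a ^ n * b ^ n), fun n => p (a ^ n * b ^ n),
    (ha.eventually_pow_mul_pow_ne_one hb hab).mono fun n hn => hmp _ hn⟩

lemma mem_closure_hyperbolicPairs_of_isHyperbolic [LocallyCompactSpace X] [T2Space X] [Infinite X]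
    (hyp : IsHyperbolicAction Γ X) {a b : Γ} {ma pa mb pb : X} (ha : IsHyperbolic a ma pa)
    (hb : IsHyperbolic b mb pb) (hab : ma ≠ pb) (hba : pa ≠ mb) :
    (pa, mb) ∈ closure (hyperbolicPairs Γ X) := by
  obtain ⟨m, p, h⟩ := hyp.exists_eventually_isHyperbolic_pow_mul_pow ha hb hab
  exact mem_closure_of_tendsto ((ha.tendsto_attracting_pow_mul_pow hb hab hba h).prodMk_nhds
    (ha.tendsto_repelling_pow_mul_pow hb hab hba h)) (h.mono fun n hn => ⟨_, hn⟩)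

lemma mem_closure_hyperbolicPairs [LocallyCompactSpace X] [T2Space X] [Nontrivial X]
    [ContinuousConstSMul Γ X] [MulAction.IsMinimal Γ X] (hyp : IsHyperbolicAction Γ X) {x y : X}
    (hxy : x ≠ y) : (x, y) ∈ closure (hyperbolicPairs Γ X) := by
  have := hyp.infinite
  rw [← closure_closure, mem_closure_iff_nhds]
  intro T hT
  obtain ⟨U, hU, V, hV, hUV⟩ := mem_nhds_prod_iff.1 hT
  obtain ⟨b, pb, mb, hb, ⟨hmbV, hmbx⟩, -⟩ :=
    hyp.exists_attracting_mem_nhds (inter_mem hV (isOpen_ne.mem_nhds hxy.symm)) x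
  obtain ⟨a, ma, pa, ha, ⟨hpaU, hpamb⟩, hab⟩ :=
    hyp.exists_attracting_mem_nhds (inter_mem hU (isOpen_ne.mem_nhds (Ne.symm hmbx))) pb
  exact ⟨(pa, mb), hUV ⟨hpaU, hmbV⟩,
    hyp.mem_closure_hyperbolicPairs_of_isHyperbolic ha hb.inv hab hpamb⟩

end IsHyperbolicAction

/-! ### Cross-ratios -/

/-- The additive cross-ratio of a kernel `C`, the coboundary-invariant quantity attached to a
B-cocycle `(c, C)`. -/
def crossRatio {X K : Type*} [AddGroup K] (C : X → X → K) (x y z w : X) : K :=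
  C x y + C z w - C x w - C z y

lemma funext_of_add_eq_add {X K : Type*} [Infinite X] [Field K] [NeZero (2 : K)] {f g : X → K}
    (h : ∀ x y, x ≠ y → f x + f y = g x + g y) : f = g := by
  funext x
  obtain ⟨y, hy, z, hz, hyz⟩ := (finite_singleton x).infinite_compl.nontrivial
  have two_mul_eq : 2 * f x = 2 * g x := by
    linear_combination h x y (Ne.symm hy) + h x z (Ne.symm hz) - h y z hyz
  exact mul_left_cancel₀ two_ne_zero two_mul_eq

lemma exists_eq_add_sub_of_crossRatio_eq_zero {X K : Type*} [Infinite X] [AddCommGroup K]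
    {S : X → X → K} (hsymm : ∀ x y, S x y = S y x)
    (hS : ∀ x y z w, x ≠ y → z ≠ w → x ≠ w → z ≠ y → crossRatio S x y z w = 0) (x : X) :
    ∃ v : K, ∀ y z, y ≠ x → z ≠ x → y ≠ z → S x y + S x z - S y z = v := by
  have change {y z z'} (hz : z ≠ x) (hyz : y ≠ z) (hz' : z' ≠ x) (hyz' : y ≠ z') :
      S x y + S x z - S y z = S x y + S x z' - S y z' := by
    have := hS x z y z' hz.symm hyz' hz'.symm hyz
    rw [crossRatio, sub_sub, sub_eq_zero] at this
    rw [sub_eq_sub_iff_add_eq_add, add_assoc, this, add_assoc]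
  have swap (y z) : S x y + S x z - S y z = S x z + S x y - S z y := by
    rw [hsymm y z, add_comm (S x y)]
  obtain ⟨a, ha, b, hb, hab⟩ := (finite_singleton x).infinite_compl.nontrivial
  refine ⟨S x a + S x b - S a b, fun y z hy hz hyz => ?_⟩
  obtain ⟨w, hw⟩ := (toFinite {x, a, y}).exists_notMem
  simp only [mem_insert_iff, mem_singleton_iff, not_or] at hw
  obtain ⟨hwx, hwa, hwy⟩ := hw
  calc S x y + S x z - S y z
      = S x y + S x w - S y w := change hz hyz hwx (Ne.symm hwy)
    _ = S x w + S x y - S w y := swap y w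
    _ = S x w + S x a - S w a := change hy hwy ha hwa
    _ = S x a + S x w - S a w := swap w a
    _ = S x a + S x b - S a b := change hwx (Ne.symm hwa) hb hab

lemma exists_eq_add_of_crossRatio_eq_zero {X K : Type*} [Infinite X] [Field K] [NeZero (2 : K)]
    {S : X → X → K} (hsymm : ∀ x y, S x y = S y x)
    (hS : ∀ x y z w, x ≠ y → z ≠ w → x ≠ w → z ≠ y → crossRatio S x y z w = 0) :
    ∃ φ : X → K, ∀ x y, x ≠ y → S x y = φ x + φ y := by
  choose v hv using exists_eq_add_sub_of_crossRatio_eq_zero hsymm hS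
  refine ⟨fun x => v x / 2, fun x y hxy => ?_⟩
  obtain ⟨z, hz⟩ := (toFinite {x, y}).exists_notMem
  simp only [mem_insert_iff, mem_singleton_iff, not_or] at hz
  dsimp only
  rw [← hv x y z hxy.symm hz.1 (Ne.symm hz.2), ← hv y x z hxy hz.2 (Ne.symm hz.1), hsymm y x]
  field_simp
  ring

lemma exists_add_swap_eq_of_crossRatio_eq_zero {X K : Type*} [Infinite X] [Field K]
    [NeZero (2 : K)] {C : X → X → K}
    (hC : ∀ x y z w, x ≠ y → z ≠ w → x ≠ w → z ≠ y → crossRatio C x y z w = 0) :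
    ∃ φ : X → K, ∀ x y, x ≠ y → C x y + C y x = 2 * (φ x + φ y) := by
  obtain ⟨φ, hφ⟩ := exists_eq_add_of_crossRatio_eq_zero (S := fun x y => C x y + C y x)
    (fun x y => add_comm _ _) fun x y z w hxy hzw hxw hzy => by
      have h₁ := hC x y z w hxy hzw hxw hzy
      have h₂ := hC y x w z hxy.symm hzw.symm hzy.symm hxw.symm
      unfold crossRatio at h₁ h₂ ⊢
      linear_combination h₁ + h₂
  refine ⟨fun x => φ x / 2, fun x y hxy => ?_⟩
  rw [hφ x y hxy, ← add_div, mul_div_cancel₀ _ two_ne_zero]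

/-- The quadruples `((x, y), (z, w))` at which every argument pair of the cross-ratio lies off the
diagonal, so that the cross-ratio of a B-cocycle is continuous there. -/
def crossRatioDomain (X : Type*) : Set ((X × X) × (X × X)) :=
  {q | (q.1.1 ≠ q.1.2 ∧ q.2.1 ≠ q.2.2) ∧ (q.1.1 ≠ q.2.2 ∧ q.2.1 ≠ q.1.2)}

lemma isOpen_crossRatioDomain {X : Type*} [TopologicalSpace X] [T2Space X] :
    IsOpen (crossRatioDomain X) :=
  ((isOpen_ne_fun (by fun_prop) (by fun_prop)).inter
    (isOpen_ne_fun (by fun_prop) (by fun_prop))).inter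
    ((isOpen_ne_fun (by fun_prop) (by fun_prop)).inter
      (isOpen_ne_fun (by fun_prop) (by fun_prop)))

/-! ### Cocycles -/

section Cocycles

variable {Γ X : Type*} [Group Γ] [MulAction Γ X] {c : Γ → X → ℝ}

namespace IsCocycle

lemma apply_one (hc : IsCocycle c) (x : X) : c 1 x = 0 := by
  simpa using hc 1 1 x

lemma apply_pow_of_smul_eq (hc : IsCocycle c) {g : Γ} {x : X} (hx : g • x = x) (n : ℕ) :
    c (g ^ n) x = n * c g x := by
  induction n with
  | zero => simp [hc.apply_one]
  | succ n ih => rw [pow_succ, hc, hx, ih]; push_cast; ring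

end IsCocycle

variable [TopologicalSpace X] {C : X → X → ℝ}

namespace IsBCocycle

lemma sub {c' : Γ → X → ℝ} {C' : X → X → ℝ} (hc : IsBCocycle c C) (hc' : IsBCocycle c' C') :
    IsBCocycle (fun γ x => c γ x - c' γ x) (fun x y => C x y - C' x y) := by
  obtain ⟨hcoc, hcont, hC, hsmul⟩ := hc
  obtain ⟨hcoc', hcont', hC', hsmul'⟩ := hc'
  refine ⟨fun γ η x => ?_, fun γ => (hcont γ).sub (hcont' γ), hC.sub hC', fun γ x y hxy => ?_⟩
  · linear_combination hcoc γ η x - hcoc' γ η x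
  · linear_combination hsmul γ x y hxy - hsmul' γ x y hxy

lemma tendsto_kernel [T2Space X] (hc : IsBCocycle c C) {ι : Type*} {l : Filter ι} {u v : ι → X}
    {x y : X} (hu : Tendsto u l (𝓝 x)) (hv : Tendsto v l (𝓝 y)) (hxy : x ≠ y) :
    Tendsto (fun i => C (u i) (v i)) l (𝓝 (C x y)) :=
  (hc.2.2.1.continuousAt ((isOpen_ne_fun continuous_fst continuous_snd).mem_nhds hxy)).tendsto.comp
    (hu.prodMk_nhds hv)

lemma continuousOn_kernel_comp (hc : IsBCocycle c C) {Y : Type*} [TopologicalSpace Y] {s : Set Y}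
    {u v : Y → X} (hu : Continuous u) (hv : Continuous v) (huv : ∀ q ∈ s, u q ≠ v q) :
    ContinuousOn (fun q => C (u q) (v q)) s :=
  hc.2.2.1.comp (hu.prodMk hv).continuousOn huv

lemma continuousOn_crossRatio (hc : IsBCocycle c C) :
    ContinuousOn (fun q : (X × X) × (X × X) => crossRatio C q.1.1 q.1.2 q.2.1 q.2.2)
      (crossRatioDomain X) :=
  (((hc.continuousOn_kernel_comp (by fun_prop) (by fun_prop) fun _ hq => hq.1.1).add
    (hc.continuousOn_kernel_comp (by fun_prop) (by fun_prop) fun _ hq => hq.1.2)).sub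
    (hc.continuousOn_kernel_comp (by fun_prop) (by fun_prop) fun _ hq => hq.2.1)).sub
    (hc.continuousOn_kernel_comp (by fun_prop) (by fun_prop) fun _ hq => hq.2.2)

lemma apply_repelling (hc : IsBCocycle c C) {g : Γ} {m p : X} (h : IsHyperbolic g m p) :
    c g m = -c g p := by
  have := hc.2.2.2 g m p h.ne
  rw [h.smul_repelling, h.smul_attracting] at this
  linarith

lemma apply_pow (hc : IsBCocycle c C) {g : Γ} {m p x : X} (h : IsHyperbolic g m p) (hx : x ≠ m)
    (n : ℕ) : c (g ^ n) x = C (g ^ n • x) m - C x m + n * c g p := by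
  have := hc.2.2.2 (g ^ n) x m hx
  rw [pow_smul_eq_of_smul_eq h.smul_repelling, hc.1.apply_pow_of_smul_eq h.smul_repelling,
    hc.apply_repelling h] at this
  linarith

theorem tendsto_period_pow_mul_pow [LocallyCompactSpace X] [T2Space X] [Infinite X]
    (hc : IsBCocycle c C) {a b : Γ} {ma pa mb pb : X} (ha : IsHyperbolic a ma pa)
    (hb : IsHyperbolic b mb pb) (hab : ma ≠ pb) (hba : pa ≠ mb) {m p : ℕ → X}
    (h : ∀ᶠ n in atTop, IsHyperbolic (a ^ n * b ^ n) (m n) (p n)) :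
    Tendsto (fun n => c (a ^ n * b ^ n) (p n) - n * c a pa - n * c b pb) atTop
      (𝓝 (crossRatio C pa ma pb mb)) := by
  have hp : Tendsto p atTop (𝓝 pa) := ha.tendsto_attracting_pow_mul_pow hb hab hba h
  have hbp : Tendsto (fun n => b ^ n • p n) atTop (𝓝 pb) := hb.tendsto_pow_smul_of_tendsto hp hba
  have hlim : Tendsto (fun n => crossRatio C (p n) ma (b ^ n • p n) mb) atTop
      (𝓝 (crossRatio C pa ma pb mb)) :=
    (((hc.tendsto_kernel hp tendsto_const_nhds ha.ne.symm).add
      (hc.tendsto_kernel hbp tendsto_const_nhds hb.ne.symm)).sub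
      (hc.tendsto_kernel hp tendsto_const_nhds hba)).sub
      (hc.tendsto_kernel hbp tendsto_const_nhds hab.symm)
  refine hlim.congr' ?_
  filter_upwards [h, hp (isOpen_ne.mem_nhds hba), hbp (isOpen_ne.mem_nhds hab.symm)]
    with n hn hpn hbpn
  have hfix : a ^ n • b ^ n • p n = p n := by rw [← mul_smul, hn.smul_attracting]
  rw [hc.1, hc.apply_pow ha hbpn, hc.apply_pow hb hpn, hfix, crossRatio]
  ring

lemma crossRatio_eq_zero_of_isHyperbolic [LocallyCompactSpace X] [T2Space X] [Infinite X]
    (hc : IsBCocycle c C) (hyp : IsHyperbolicAction Γ X)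
    (hper : ∀ (γ : Γ) (m p : X), IsHyperbolic γ m p → c γ p = 0) {a b : Γ} {ma pa mb pb : X}
    (ha : IsHyperbolic a ma pa) (hb : IsHyperbolic b mb pb) (hab : ma ≠ pb) (hba : pa ≠ mb) :
    crossRatio C pa ma pb mb = 0 := by
  obtain ⟨m, p, h⟩ := hyp.exists_eventually_isHyperbolic_pow_mul_pow ha hb hab
  refine tendsto_nhds_unique (hc.tendsto_period_pow_mul_pow ha hb hab hba h)
    (tendsto_const_nhds.congr' ?_)
  filter_upwards [h] with n hn
  rw [hper _ _ _ hn, hper _ _ _ ha, hper _ _ _ hb]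
  ring

theorem crossRatio_eq_zero [LocallyCompactSpace X] [T2Space X] [Nontrivial X]
    [ContinuousConstSMul Γ X] [MulAction.IsMinimal Γ X] (hc : IsBCocycle c C)
    (hyp : IsHyperbolicAction Γ X) (hper : ∀ (γ : Γ) (m p : X), IsHyperbolic γ m p → c γ p = 0)
    (x y z w : X) (hxy : x ≠ y) (hzw : z ≠ w) (hxw : x ≠ w) (hzy : z ≠ y) :
    crossRatio C x y z w = 0 := by
  have := hyp.infinite
  let P : Set ((X × X) × (X × X)) := hyperbolicPairs Γ X ×ˢ hyperbolicPairs Γ X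
  have hP : crossRatioDomain X ⊆ closure P := fun q hq => by
    rw [closure_prod_eq]
    exact ⟨hyp.mem_closure_hyperbolicPairs hq.1.1, hyp.mem_closure_hyperbolicPairs hq.1.2⟩
  have hzero : EqOn (fun q : (X × X) × (X × X) => crossRatio C q.1.1 q.1.2 q.2.1 q.2.2) 0
      (crossRatioDomain X ∩ P) := by
    rintro q ⟨⟨-, hba, hab⟩, ⟨a, ha⟩, ⟨b, hb⟩⟩
    exact hc.crossRatio_eq_zero_of_isHyperbolic hyp hper ha hb hab.symm hba
  exact hzero.of_subset_closure hc.continuousOn_crossRatio continuousOn_const inter_subset_left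
    ((subset_inter subset_rfl hP).trans isOpen_crossRatioDomain.inter_closure)
    (show ((x, y), (z, w)) ∈ crossRatioDomain X from ⟨⟨hxy, hzw⟩, hxw, hzy⟩)

lemma continuous_of_add_swap_eq [T2Space X] [Nontrivial X] (hc : IsBCocycle c C) {φ : X → ℝ}
    (hφ : ∀ x y, x ≠ y → C x y + C y x = 2 * (φ x + φ y)) : Continuous φ := by
  refine continuous_iff_continuousAt.2 fun x => ?_
  obtain ⟨y, hy⟩ := exists_ne x
  have eq_near {t : X} (ht : t ≠ y) : (C t y + C y t) / 2 - φ y = φ t := by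
    rw [hφ t y ht]; ring
  have hlim : Tendsto (fun t => (C t y + C y t) / 2 - φ y) (𝓝 x) (𝓝 (φ x)) := by
    rw [← eq_near hy.symm]
    exact (((hc.tendsto_kernel tendsto_id tendsto_const_nhds hy.symm).add
      (hc.tendsto_kernel tendsto_const_nhds tendsto_id hy)).div_const 2).sub_const _
  exact hlim.congr' ((isOpen_ne.eventually_mem hy.symm).mono fun t ht => eq_near ht)

lemma apply_eq_sub_of_add_swap_eq [Infinite X] (hc : IsBCocycle c C) {φ : X → ℝ}
    (hφ : ∀ x y, x ≠ y → C x y + C y x = 2 * (φ x + φ y)) (γ : Γ) (x : X) :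
    c γ x = φ (γ • x) - φ x := by
  refine congr_fun (funext_of_add_eq_add (g := fun x => φ (γ • x) - φ x) fun x y hxy => ?_) x
  linear_combination (hφ _ _ ((MulAction.injective γ).ne hxy) - hφ x y hxy
    - hc.2.2.2 γ x y hxy - hc.2.2.2 γ y x hxy.symm) / 2

theorem exists_continuous_eq_sub_of_period_eq_zero [LocallyCompactSpace X] [T2Space X]
    [Nontrivial X] [ContinuousConstSMul Γ X] [MulAction.IsMinimal Γ X] (hc : IsBCocycle c C)
    (hyp : IsHyperbolicAction Γ X) (hper : ∀ (γ : Γ) (m p : X), IsHyperbolic γ m p → c γ p = 0) :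
    ∃ φ : X → ℝ, Continuous φ ∧ ∀ (γ : Γ) (x : X), c γ x = φ (γ • x) - φ x := by
  have := hyp.infinite
  obtain ⟨φ, hφ⟩ := exists_add_swap_eq_of_crossRatio_eq_zero (hc.crossRatio_eq_zero hyp hper)
  exact ⟨φ, hc.continuous_of_add_swap_eq hφ, hc.apply_eq_sub_of_add_swap_eq hφ⟩

end IsBCocycle

end Cocycles

theorem stmt0_general {Γ X : Type*} [Group Γ] [TopologicalSpace X] [LocallyCompactSpace X]
    [T2Space X] [Nontrivial X] [MulAction Γ X] [ContinuousConstSMul Γ X] [MulAction.IsMinimal Γ X]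
    (pm pp : Γ → X) (hyp : ∀ γ : Γ, γ ≠ 1 → IsHyperbolic γ (pm γ) (pp γ))
    (α β : Γ → X → ℝ) (A B : X → X → ℝ) (hα : IsBCocycle α A) (hβ : IsBCocycle β B) :
    (∀ γ : Γ, γ ≠ 1 → α γ (pp γ) = β γ (pp γ)) ↔
      ∃ φ : X → ℝ, Continuous φ ∧ ∀ γ : Γ, ∀ x : X, α γ x - β γ x = φ (γ • x) - φ x := by
  have hact : IsHyperbolicAction Γ X := fun γ hγ => ⟨_, _, hyp γ hγ⟩
  have := hact.infinite
  constructor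
  · intro hℓ
    refine (hα.sub hβ).exists_continuous_eq_sub_of_period_eq_zero hact fun γ m p h => ?_
    have hγ : γ ≠ 1 := h.ne_one
    rw [h.attracting_unique (hyp γ hγ), hℓ γ hγ, sub_self]
  · rintro ⟨φ, -, hφ⟩ γ hγ
    rw [← sub_eq_zero, hφ, (hyp γ hγ).smul_attracting, sub_self]

theorem stmt0 {Γ X : Type*} [Group Γ] [Nontrivial Γ] [TopologicalSpace X]
    [MeasurableSpace X] [MulAction Γ X]
    (pm pp : Γ → X) (hgb : IsGeometricBoundary Γ X pm pp)
    (α β : Γ → X → ℝ) (A B : X → X → ℝ)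
    (hα : IsBCocycle α A) (hβ : IsBCocycle β B) :
    (∀ γ : Γ, γ ≠ 1 → α γ (pp γ) = β γ (pp γ)) ↔
      ∃ φ : X → ℝ, Continuous φ ∧ ∀ γ : Γ, ∀ x : X, α γ x - β γ x = φ (γ • x) - φ x := by
  have ⟨_, _, _, _, _, hmin, hyp, _⟩ := hgb
  have : MulAction.IsMinimal Γ X := ⟨hmin⟩
  exact stmt0_general pm pp hyp α β A B hα hβ
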